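/- For every real q > 1 there exists a constant B > 0, depending only on ζ and q, such that for every λ > 0, every continuous compactly supported f : ℝ → ℂ, and every τ̃ ∈ ℝ, ∫_{τ̃}^{τ̃+1} |(K_λ ∗ f)(t)|² dt ≤ B Σ_{ℓ ∈ ℤ} (1+|ℓ|)^{-q} ∫_{τ̃+ℓ/λ}^{τ̃+1+(ℓ+1)/λ} |f(s)|² ds. -/

import Mathlib

open MeasureTheory Real

/-- The low-pass kernel `K_λ(t) = (2π)⁻¹ λ ∫ ζ(ω) e^{iλωt} dω`. -/
noncomputable def lowPassKernel (ζ : ℝ → ℝ) (lam t : ℝ) : ℂ :=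
  ((2 * Real.pi)⁻¹ * lam : ℝ) * ∫ ω : ℝ, (ζ ω : ℂ) * Complex.exp (Complex.I * (lam * ω * t))

/-- The low-pass filtering `K_λ ∗ f` of `f` at scale `λ`. -/
noncomputable def lowPassFilter (ζ : ℝ → ℝ) (lam : ℝ) (f : ℝ → ℂ) (t : ℝ) : ℂ :=
  ∫ s : ℝ, lowPassKernel ζ lam (t - s) * f s

/-!
Put `w_q(x) = (1 + |x|)^{-q}`. Rescaling, `(K_λ ∗ f)(t) = ∫ K_1(-v) f(t + v/λ) dv`, and `K_1` is
the Fourier transform of a Schwartz function, so `|K_1| ≤ C w_q`. By Cauchy–Schwarz with respect to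
the finite measure `w_q(v) dv` and Tonelli,
`∫_a^b |K_λ ∗ f|² ≤ C² (∫ w_q) ∫ w_q(v) (∫_{a + v/λ}^{b + v/λ} |f|²) dv`.
For `v ∈ [ℓ, ℓ + 1)` the inner window lies in `[a + ℓ/λ, b + (ℓ + 1)/λ]` and
`w_q(v) ≤ 2^q w_q(ℓ)`, so cutting the outer integral at the integers gives the sum over `ℓ`.
-/

open Set Function
open scoped ENNReal NNReal SchwartzMap FourierTransform

section WeightedCauchySchwarz

variable {α β : Type*} [MeasurableSpace α] [MeasurableSpace β] {μ : Measure α} {ν : Measure β}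

lemma sq_lintegral_mul_le {w g : α → ℝ≥0∞} (hw : AEMeasurable w μ) (hg : AEMeasurable g μ) :
    (∫⁻ x, w x * g x ∂μ) ^ 2 ≤ (∫⁻ x, w x ∂μ) * ∫⁻ x, w x * g x ^ 2 ∂μ := by
  have sqrt_sq (y : ℝ≥0∞) : (y ^ (1 / 2 : ℝ)) ^ 2 = y := by
    rw [← ENNReal.rpow_natCast, ← ENNReal.rpow_mul]
    norm_num
  have sqrt_mul_sqrt (x : α) :
      w x ^ (1 / 2 : ℝ) * (w x * g x ^ 2) ^ (1 / 2 : ℝ) = w x * g x := by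
    rw [← ENNReal.mul_rpow_of_nonneg _ _ (by norm_num), ← mul_assoc, ← sq, ← mul_pow,
      ← ENNReal.rpow_natCast, ← ENNReal.rpow_mul]
    norm_num
  calc (∫⁻ x, w x * g x ∂μ) ^ 2
      = (∫⁻ x, w x ^ (1 / 2 : ℝ) * (w x * g x ^ 2) ^ (1 / 2 : ℝ) ∂μ) ^ 2 := by
        simp_rw [sqrt_mul_sqrt]
    _ ≤ ((∫⁻ x, w x ∂μ) ^ (1 / 2 : ℝ) * (∫⁻ x, w x * g x ^ 2 ∂μ) ^ (1 / 2 : ℝ)) ^ 2 := by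
        gcongr
        exact ENNReal.lintegral_mul_norm_pow_le hw (hw.mul (hg.pow_const 2))
          (by norm_num) (by norm_num) (by norm_num)
    _ = (∫⁻ x, w x ∂μ) * ∫⁻ x, w x * g x ^ 2 ∂μ := by rw [mul_pow, sqrt_sq, sqrt_sq]

lemma lintegral_sq_lintegral_mul_le [SFinite μ] [SFinite ν] {w : β → ℝ≥0∞} {F : α → β → ℝ≥0∞}
    (hw : AEMeasurable w ν) (hF : AEMeasurable (uncurry F) (μ.prod ν)) :
    ∫⁻ x, (∫⁻ y, w y * F x y ∂ν) ^ 2 ∂μ ≤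
      (∫⁻ y, w y ∂ν) * ∫⁻ y, w y * ∫⁻ x, F x y ^ 2 ∂μ ∂ν := by
  have hwF : AEMeasurable (uncurry fun x y ↦ w y * F x y ^ 2) (μ.prod ν) :=
    hw.comp_snd.mul (hF.pow_const 2)
  have hF_left : ∀ᵐ x ∂μ, AEMeasurable (F x) ν :=
    hF.aestronglyMeasurable.prodMk_left.mono fun _ h ↦ h.aemeasurable
  have hF_right : ∀ᵐ y ∂ν, AEMeasurable (fun x ↦ F x y) μ :=
    hF.prod_swap.aestronglyMeasurable.prodMk_left.mono fun _ h ↦ h.aemeasurable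
  calc ∫⁻ x, (∫⁻ y, w y * F x y ∂ν) ^ 2 ∂μ
      ≤ ∫⁻ x, (∫⁻ y, w y ∂ν) * ∫⁻ y, w y * F x y ^ 2 ∂ν ∂μ :=
        lintegral_mono_ae (hF_left.mono fun _ hx ↦ sq_lintegral_mul_le hw hx)
    _ = (∫⁻ y, w y ∂ν) * ∫⁻ x, ∫⁻ y, w y * F x y ^ 2 ∂ν ∂μ :=
        lintegral_const_mul'' _ hwF.lintegral_prod_right'
    _ = (∫⁻ y, w y ∂ν) * ∫⁻ y, ∫⁻ x, w y * F x y ^ 2 ∂μ ∂ν := by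
        rw [lintegral_lintegral_swap hwF]
    _ = (∫⁻ y, w y ∂ν) * ∫⁻ y, w y * ∫⁻ x, F x y ^ 2 ∂μ ∂ν := by
        congr 1
        exact lintegral_congr_ae (hF_right.mono fun _ hy ↦
          lintegral_const_mul'' _ (hy.pow_const 2))

end WeightedCauchySchwarz

section NormSq

variable {α E : Type*} [MeasurableSpace α] {μ : Measure α} [NormedAddCommGroup E]

lemma integral_norm_sq_le_toReal_lintegral (f : α → E) :
    ∫ x, ‖f x‖ ^ 2 ∂μ ≤ (∫⁻ x, ‖f x‖ₑ ^ 2 ∂μ).toReal :=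
  (le_norm_self _).trans <| (norm_integral_le_lintegral_norm _).trans_eq <| by
    simp [ENNReal.ofReal_pow]

lemma integral_norm_sq_eq_toReal_lintegral {f : α → E} (hf : AEStronglyMeasurable f μ) :
    ∫ x, ‖f x‖ ^ 2 ∂μ = (∫⁻ x, ‖f x‖ₑ ^ 2 ∂μ).toReal := by
  simpa using integral_norm_eq_lintegral_enorm (hf.norm.pow 2)

end NormSq

section PolyWeight

variable {q : ℝ}

/-- The polynomially decaying weight `(1 + |x|)^{-q}`, with values in `[0, ∞]` so that it can be
integrated and summed without integrability side conditions. -/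
noncomputable def polyWeight (q x : ℝ) : ℝ≥0∞ := .ofReal ((1 + |x|) ^ (-q))

lemma measurable_polyWeight (q : ℝ) : Measurable (polyWeight q) := by
  unfold polyWeight
  fun_prop

lemma toReal_polyWeight (q x : ℝ) : (polyWeight q x).toReal = (1 + |x|) ^ (-q) :=
  ENNReal.toReal_ofReal (by positivity)

lemma lintegral_polyWeight_ne_top (hq : 1 < q) : ∫⁻ x, polyWeight q x ≠ ∞ :=
  (finite_integral_one_add_norm (E := ℝ) (by simpa using hq)).ne

lemma tsum_polyWeight_intCast_ne_top (hq : 1 < q) : ∑' ℓ : ℤ, polyWeight q ℓ ≠ ∞ := by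
  refine Summable.tsum_ofReal_ne_top <|
    (summable_abs_int_rpow hq).of_norm_bounded_eventually ?_
  filter_upwards [(finite_singleton (0 : ℤ)).compl_mem_cofinite] with ℓ hℓ
  have hℓ_pos : 0 < |(ℓ : ℝ)| := abs_pos.2 (Int.cast_ne_zero.2 hℓ)
  rw [norm_of_nonneg (by positivity)]
  exact rpow_le_rpow_of_nonpos hℓ_pos (by linarith) (by linarith)

lemma tsum_polyWeight_intCast_mul_ne_top (hq : 1 < q) {J : ℤ → ℝ≥0∞} {A : ℝ≥0∞} (hA : A ≠ ∞)
    (hJ : ∀ ℓ, J ℓ ≤ A) : ∑' ℓ : ℤ, polyWeight q ℓ * J ℓ ≠ ∞ := by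
  refine ne_top_of_le_ne_top ?_ (ENNReal.tsum_le_tsum fun ℓ ↦ mul_le_mul_right (hJ ℓ) _)
  rw [ENNReal.tsum_mul_right]
  exact ENNReal.mul_ne_top (tsum_polyWeight_intCast_ne_top hq) hA

lemma polyWeight_le_of_abs_sub_le_one (hq : 0 ≤ q) {x y : ℝ} (hxy : |x - y| ≤ 1) :
    polyWeight q x ≤ .ofReal (2 ^ q) * polyWeight q y := by
  have half_le : (1 + |y|) / 2 ≤ 1 + |x| := by
    linarith [abs_sub_abs_le_abs_sub y x, abs_sub_comm x y, abs_nonneg x]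
  rw [polyWeight, polyWeight, ← ENNReal.ofReal_mul (by positivity)]
  refine ENNReal.ofReal_le_ofReal ?_
  calc (1 + |x|) ^ (-q) ≤ ((1 + |y|) / 2) ^ (-q) :=
        rpow_le_rpow_of_nonpos (by positivity) half_le (by linarith)
    _ = 2 ^ q * (1 + |y|) ^ (-q) := by
        rw [div_rpow (by positivity) (by norm_num), rpow_neg zero_le_two, div_inv_eq_mul, mul_comm]

lemma lintegral_polyWeight_mul_le_tsum (hq : 0 ≤ q) {g : ℝ → ℝ≥0∞} {J : ℤ → ℝ≥0∞}
    (hgJ : ∀ ℓ : ℤ, ∀ x ∈ Ico (ℓ : ℝ) (ℓ + 1), g x ≤ J ℓ) :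
    ∫⁻ x, polyWeight q x * g x ≤ .ofReal (2 ^ q) * ∑' ℓ : ℤ, polyWeight q ℓ * J ℓ := by
  rw [← setLIntegral_univ, ← iUnion_Ico_intCast ℝ,
    lintegral_iUnion (fun _ ↦ measurableSet_Ico) (pairwise_disjoint_Ico_intCast ℝ),
    ← ENNReal.tsum_mul_left]
  refine ENNReal.tsum_le_tsum fun ℓ ↦ ?_
  calc ∫⁻ x in Ico (ℓ : ℝ) (ℓ + 1), polyWeight q x * g x
      ≤ ∫⁻ _ in Ico (ℓ : ℝ) (ℓ + 1), .ofReal (2 ^ q) * (polyWeight q ℓ * J ℓ) := by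
        refine setLIntegral_mono' measurableSet_Ico fun x hx ↦ ?_
        have hxℓ : |x - ℓ| ≤ 1 := abs_le.2 ⟨by linarith [hx.1], by linarith [hx.2]⟩
        rw [← mul_assoc]
        exact mul_le_mul' (polyWeight_le_of_abs_sub_le_one hq hxℓ) (hgJ ℓ x hx)
    _ = .ofReal (2 ^ q) * (polyWeight q ℓ * J ℓ) := by simp

end PolyWeight

section Translation

lemma setLIntegral_Ioc_comp_add_right (g : ℝ → ℝ≥0∞) (a b c : ℝ) :
    ∫⁻ t in Ioc a b, g (t + c) = ∫⁻ s in Ioc (a + c) (b + c), g s := by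
  simpa using (measurePreserving_add_right volume c).setLIntegral_comp_preimage_emb
    (measurableEmbedding_addRight c) g (Ioc (a + c) (b + c))

lemma setLIntegral_Ioc_comp_add_div_le (g : ℝ → ℝ≥0∞) {a b lam x y v : ℝ} (hlam : 0 ≤ lam)
    (hv : v ∈ Icc x y) :
    ∫⁻ t in Ioc a b, g (t + v / lam) ≤ ∫⁻ s in Ioc (a + x / lam) (b + y / lam), g s := by
  rw [setLIntegral_Ioc_comp_add_right]
  refine lintegral_mono_set (Ioc_subset_Ioc ?_ ?_) <;> gcongr
  exacts [hv.1, hv.2]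

lemma quasiMeasurePreserving_fst_add_comp_snd {G β : Type*} [AddGroup G] [MeasurableSpace G]
    [MeasurableAdd₂ G] [MeasurableSpace β] {ρ μ : Measure G} [ρ.IsAddRightInvariant]
    {ν : Measure β} [SFinite μ] [SFinite ν] (hμ : μ ≪ ρ) {φ : β → G} (hφ : Measurable φ) :
    Measure.QuasiMeasurePreserving (fun p : G × β ↦ p.1 + φ p.2) (μ.prod ν) ρ :=
  QuasiMeasurePreserving.prod_of_left (by fun_prop) <| .of_forall fun v ↦
    (measurePreserving_add_right ρ (φ v)).quasiMeasurePreserving.mono_left hμ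

end Translation

section Kernel

lemma exists_norm_schwartzMap_le_one_add_norm_rpow {E F : Type*} [NormedAddCommGroup E]
    [NormedSpace ℝ E] [NormedAddCommGroup F] [NormedSpace ℝ F] (S : 𝓢(E, F)) (q : ℝ) :
    ∃ C : ℝ≥0, ∀ x, ‖S x‖ ≤ C * (1 + ‖x‖) ^ (-q) := by
  obtain ⟨N, hN⟩ := exists_nat_ge q
  set M := 2 ^ N * (Finset.Iic (N, 0)).sup (fun m ↦ SchwartzMap.seminorm ℝ m.1 m.2) S
  have hM (x : E) : (1 + ‖x‖) ^ N * ‖S x‖ ≤ M := by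
    simpa using SchwartzMap.one_add_le_sup_seminorm_apply (𝕜 := ℝ) (m := (N, 0)) (n := 0)
      le_rfl le_rfl S x
  refine ⟨⟨M, le_trans (by positivity) (hM 0)⟩, fun x ↦ ?_⟩
  rw [rpow_neg (by positivity), ← div_eq_mul_inv, le_div_iff₀ (by positivity), mul_comm]
  calc (1 + ‖x‖) ^ q * ‖S x‖ ≤ (1 + ‖x‖) ^ (N : ℝ) * ‖S x‖ := by
        gcongr
        linarith [norm_nonneg x]
    _ ≤ M := by
        rw [rpow_natCast]
        exact hM x

lemma lowPassKernel_eq_fourier (ζ : ℝ → ℝ) (lam t : ℝ) :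
    lowPassKernel ζ lam t =
      ((2 * π)⁻¹ * lam : ℝ) * 𝓕 (fun ω ↦ (ζ ω : ℂ)) (-(2 * π)⁻¹ * (lam * t)) := by
  rw [lowPassKernel, fourier_real_eq_integral_exp_smul]
  congr 2 with ω
  have phase : -2 * π * ω * (-(2 * π)⁻¹ * (lam * t)) = lam * ω * t := by field_simp
  rw [phase, smul_eq_mul, mul_comm]
  push_cast
  ring_nf

lemma lowPassKernel_eq_mul_lowPassKernel_one (ζ : ℝ → ℝ) (lam t : ℝ) :
    lowPassKernel ζ lam t = lam * lowPassKernel ζ 1 (lam * t) := by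
  simp only [lowPassKernel_eq_fourier, one_mul, mul_one]
  push_cast
  ring

lemma exists_enorm_lowPassKernel_one_le (ζ : 𝓢(ℝ, ℝ)) (q : ℝ) :
    ∃ C : ℝ≥0, ∀ x, ‖lowPassKernel ζ 1 x‖ₑ ≤ C * polyWeight q x := by
  let dilation : ℝ ≃L[ℝ] ℝ :=
    .unitsEquivAut ℝ (Units.mk0 (-(2 * π)⁻¹) (neg_ne_zero.2 (by positivity)))
  let S : 𝓢(ℝ, ℂ) := ((2 * π)⁻¹ : ℝ) •
    SchwartzMap.compCLMOfContinuousLinearEquiv ℝ dilation (𝓕 (ζ.postcompCLM Complex.ofRealCLM))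
  have hS (x : ℝ) : lowPassKernel ζ 1 x = S x := by
    have hcoe : ⇑(ζ.postcompCLM Complex.ofRealCLM) = fun ω ↦ (ζ ω : ℂ) := rfl
    simp [S, dilation, lowPassKernel_eq_fourier, SchwartzMap.fourier_coe, hcoe, mul_comm]
  obtain ⟨C, hSC⟩ := exists_norm_schwartzMap_le_one_add_norm_rpow S q
  refine ⟨C, fun x ↦ ?_⟩
  rw [polyWeight, ← ENNReal.ofReal_coe_nnreal, ← ENNReal.ofReal_mul C.coe_nonneg, ← ofReal_norm, hS]
  exact ENNReal.ofReal_le_ofReal (hSC x)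

end Kernel

section Filter

variable {ζ : ℝ → ℝ} {lam : ℝ} {f : ℝ → ℂ}

lemma lowPassFilter_eq_integral_comp_add_div (hlam : 0 < lam) (t : ℝ) :
    lowPassFilter ζ lam f t = ∫ v, lowPassKernel ζ 1 (-v) * f (t + v / lam) := by
  have rescale (u : ℝ) : lowPassKernel ζ lam (t - (t + u)) * f (t + u) =
      lam • (lowPassKernel ζ 1 (-(u * lam)) * f (t + u * lam / lam)) := by
    rw [lowPassKernel_eq_mul_lowPassKernel_one, mul_div_cancel_right₀ u hlam.ne',
      Complex.real_smul, mul_assoc]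
    ring_nf
  rw [lowPassFilter, ← integral_add_left_eq_self _ t]
  simp_rw [rescale]
  rw [integral_smul, Measure.integral_comp_mul_right
    (fun v ↦ lowPassKernel ζ 1 (-v) * f (t + v / lam)), smul_smul,
    abs_of_pos (inv_pos.2 hlam), mul_inv_cancel₀ hlam.ne', one_smul]

variable {q : ℝ} {C : ℝ≥0}

lemma enorm_lowPassFilter_le (hK : ∀ x, ‖lowPassKernel ζ 1 x‖ₑ ≤ C * polyWeight q x)
    (hlam : 0 < lam) (t : ℝ) :
    ‖lowPassFilter ζ lam f t‖ₑ ≤ C * ∫⁻ v, polyWeight q v * ‖f (t + v / lam)‖ₑ := by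
  rw [lowPassFilter_eq_integral_comp_add_div hlam, ← lintegral_const_mul' _ _ ENNReal.coe_ne_top]
  refine (enorm_integral_le_lintegral_enorm _).trans (lintegral_mono fun v ↦ ?_)
  rw [enorm_mul, ← mul_assoc]
  gcongr
  simpa [polyWeight] using hK (-v)

lemma setLIntegral_enorm_lowPassFilter_sq_le
    (hK : ∀ x, ‖lowPassKernel ζ 1 x‖ₑ ≤ C * polyWeight q x) (hq : 0 ≤ q) (hlam : 0 < lam)
    (hf : AEStronglyMeasurable f) (a b : ℝ) :
    ∫⁻ t in Ioc a b, ‖lowPassFilter ζ lam f t‖ₑ ^ 2 ≤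
      C ^ 2 * (∫⁻ v, polyWeight q v) * .ofReal (2 ^ q) *
        ∑' ℓ : ℤ, polyWeight q ℓ *
          ∫⁻ s in Ioc (a + ℓ / lam) (b + (ℓ + 1) / lam), ‖f s‖ₑ ^ 2 := by
  have hf_shift : AEMeasurable (uncurry fun t v ↦ ‖f (t + v / lam)‖ₑ)
      ((volume.restrict (Ioc a b)).prod volume) :=
    (hf.comp_quasiMeasurePreserving
      (quasiMeasurePreserving_fst_add_comp_snd Measure.restrict_le_self.absolutelyContinuous
        (φ := (· / lam)) (by fun_prop))).enorm
  calc ∫⁻ t in Ioc a b, ‖lowPassFilter ζ lam f t‖ₑ ^ 2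
      ≤ ∫⁻ t in Ioc a b, C ^ 2 * (∫⁻ v, polyWeight q v * ‖f (t + v / lam)‖ₑ) ^ 2 := by
        refine lintegral_mono fun t ↦ ?_
        rw [← mul_pow]
        gcongr
        exact enorm_lowPassFilter_le hK hlam t
    _ = C ^ 2 * ∫⁻ t in Ioc a b, (∫⁻ v, polyWeight q v * ‖f (t + v / lam)‖ₑ) ^ 2 :=
        lintegral_const_mul' _ _ (by finiteness)
    _ ≤ C ^ 2 * ((∫⁻ v, polyWeight q v) *
          ∫⁻ v, polyWeight q v * ∫⁻ t in Ioc a b, ‖f (t + v / lam)‖ₑ ^ 2) := by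
        gcongr
        exact lintegral_sq_lintegral_mul_le (measurable_polyWeight q).aemeasurable hf_shift
    _ ≤ C ^ 2 * ((∫⁻ v, polyWeight q v) * (.ofReal (2 ^ q) * ∑' ℓ : ℤ, polyWeight q ℓ *
          ∫⁻ s in Ioc (a + ℓ / lam) (b + (ℓ + 1) / lam), ‖f s‖ₑ ^ 2)) := by
        gcongr
        exact lintegral_polyWeight_mul_le_tsum hq fun ℓ v hv ↦
          setLIntegral_Ioc_comp_add_div_le (‖f ·‖ₑ ^ 2) hlam.le (Ico_subset_Icc_self hv)
    _ = _ := by simp only [mul_assoc]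

end Filter

lemma exists_setLIntegral_enorm_lowPassFilter_sq_le (ζ : 𝓢(ℝ, ℝ)) {q : ℝ} (hq : 1 < q) :
    ∃ B : ℝ≥0, ∀ lam : ℝ, 0 < lam → ∀ f : ℝ → ℂ, AEStronglyMeasurable f → ∀ a b : ℝ,
      ∫⁻ t in Ioc a b, ‖lowPassFilter ζ lam f t‖ₑ ^ 2 ≤
        B * ∑' ℓ : ℤ, polyWeight q ℓ *
          ∫⁻ s in Ioc (a + ℓ / lam) (b + (ℓ + 1) / lam), ‖f s‖ₑ ^ 2 := by
  obtain ⟨C, hC⟩ := exists_enorm_lowPassKernel_one_le ζ q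
  refine ⟨C ^ 2 * (∫⁻ v, polyWeight q v).toNNReal * (2 ^ q : ℝ).toNNReal,
    fun lam hlam f hf a b ↦ ?_⟩
  push_cast
  rw [ENNReal.coe_toNNReal (lintegral_polyWeight_ne_top hq)]
  exact setLIntegral_enorm_lowPassFilter_sq_le hC (by linarith) hlam hf a b

theorem window_L2_bound_lowPassFilter_general (ζ : 𝓢(ℝ, ℝ)) {q : ℝ} (hq : 1 < q) :
    ∃ B : ℝ, 0 < B ∧ ∀ lam : ℝ, 0 < lam → ∀ f : ℝ → ℂ, MemLp f 2 → ∀ a b : ℝ, a ≤ b →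
      (∫ t in a..b, ‖lowPassFilter ζ lam f t‖ ^ 2) ≤
        B * ∑' ℓ : ℤ,
          (1 + |(ℓ : ℝ)|) ^ (-q) *
            ∫ s in (a + (ℓ : ℝ) / lam)..(b + ((ℓ : ℝ) + 1) / lam), ‖f s‖ ^ 2 := by
  obtain ⟨B, hB⟩ := exists_setLIntegral_enorm_lowPassFilter_sq_le ζ hq
  refine ⟨B + 1, by positivity, fun lam hlam f hf a b hab ↦ ?_⟩
  set J : ℤ → ℝ≥0∞ := fun ℓ ↦ ∫⁻ s in Ioc (a + ℓ / lam) (b + (ℓ + 1) / lam), ‖f s‖ₑ ^ 2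
  have hf_sq : ∫⁻ s, ‖f s‖ₑ ^ 2 ≠ ∞ := by
    simpa using (lintegral_rpow_enorm_lt_top_of_eLpNorm_lt_top two_ne_zero (by simp) hf.2).ne
  have hJ_toReal (ℓ : ℤ) :
      (∫ s in (a + (ℓ : ℝ) / lam)..(b + ((ℓ : ℝ) + 1) / lam), ‖f s‖ ^ 2) = (J ℓ).toReal := by
    rw [intervalIntegral.integral_of_le (by gcongr; linarith),
      integral_norm_sq_eq_toReal_lintegral hf.1.restrict]
  have hsum : ∑' ℓ : ℤ, polyWeight q ℓ * J ℓ ≠ ∞ :=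
    tsum_polyWeight_intCast_mul_ne_top hq hf_sq fun ℓ ↦ setLIntegral_le_lintegral _ _
  calc (∫ t in a..b, ‖lowPassFilter ζ lam f t‖ ^ 2)
      ≤ (∫⁻ t in Ioc a b, ‖lowPassFilter ζ lam f t‖ₑ ^ 2).toReal := by
        rw [intervalIntegral.integral_of_le hab]
        exact integral_norm_sq_le_toReal_lintegral _
    _ ≤ (B * ∑' ℓ : ℤ, polyWeight q ℓ * J ℓ).toReal :=
        ENNReal.toReal_mono (by finiteness) (hB lam hlam f hf.1 a b)
    _ ≤ (B + 1) * ∑' ℓ : ℤ, (polyWeight q ℓ * J ℓ).toReal := by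
        rw [ENNReal.toReal_mul, ENNReal.coe_toReal, ENNReal.tsum_toReal_eq
          (ENNReal.ne_top_of_tsum_ne_top hsum)]
        gcongr
        linarith
    _ = _ := by simp only [ENNReal.toReal_mul, toReal_polyWeight, hJ_toReal]

/-- For every `q > 1` there is `B > 0` (depending only on `ζ` and `q`) such that for every
`λ > 0`, every continuous compactly supported `f : ℝ → ℂ`, and every `τ̃ ∈ ℝ`,
`∫_{τ̃}^{τ̃+1} |(K_λ ∗ f)(t)|² dt ≤ B Σ_{ℓ ∈ ℤ} (1+|ℓ|)^{-q} ∫_{τ̃+ℓ/λ}^{τ̃+1+(ℓ+1)/λ} |f(s)|² ds`. -/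
theorem window_L2_bound_lowPassFilter
    (ζ : ℝ → ℝ) (hζ_smooth : ContDiff ℝ (⊤ : ℕ∞) ζ) (hζ_even : ∀ x, ζ (-x) = ζ x)
    (hζ_supp : Function.support ζ ⊆ Set.Icc (-2) 2)
    (hζ_one : ∀ x ∈ Set.Icc (-1 : ℝ) 1, ζ x = 1)
    (q : ℝ) (hq : 1 < q) :
    ∃ B : ℝ, 0 < B ∧ ∀ lam : ℝ, 0 < lam → ∀ f : ℝ → ℂ,
      Continuous f → HasCompactSupport f → ∀ τ : ℝ,
        (∫ t in τ..(τ + 1), ‖lowPassFilter ζ lam f t‖ ^ 2) ≤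
          B * ∑' ℓ : ℤ,
            (1 + |(ℓ : ℝ)|) ^ (-q) *
              ∫ s in (τ + (ℓ : ℝ) / lam)..(τ + 1 + ((ℓ : ℝ) + 1) / lam), ‖f s‖ ^ 2 := by
  have hζ_compact : HasCompactSupport ζ := .of_support_subset_isCompact isCompact_Icc hζ_supp
  obtain ⟨B, hB, hbound⟩ :=
    window_L2_bound_lowPassFilter_general (hζ_compact.toSchwartzMap hζ_smooth) hq
  exact ⟨B, hB, fun lam hlam f hf hf_compact τ ↦ hbound lam hlam f
    (hf.memLp_of_hasCompactSupport hf_compact) τ (τ + 1) (by linarith)⟩
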